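/- arXiv:2203.17096 — 3 statements merged into one kernel-verified Lean document; each statement's English description precedes it below -/
import Mathlib

section
/- For every α ∈ P(L(S/G)), the initial-state estimate equals the set of first components of the current-state estimate of the augmented system under the same supervisor: E^I_{S/G}(α) = I(E^C_{S/~G}(α)). -/
open scoped Classical

namespace DES

variable {X E Z : Type*}

/-- Run of a partial automaton on a string of events. -/
def runStr (δ : X → E → Option X) : X → List E → Option X
  | x, [] => some x
  | x, σ :: s => (δ x σ).bind fun y => runStr δ y s

/-- Open-loop language generated from a state. -/
def LangFrom (δ : X → E → Option X) (x0 : X) : Set (List E) :=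
  {s | (runStr δ x0 s).isSome}

/-- Open-loop language of the plant. -/
def Lang (δ : X → E → Option X) (X0 : Set X) : Set (List E) :=
  {s | ∃ x0 ∈ X0, s ∈ LangFrom δ x0}

/-- Natural projection erasing unobservable events. -/
noncomputable def proj (Eobs : Set E) (s : List E) : List E :=
  s.filter fun e => decide (e ∈ Eobs)

/-- Closed-loop language of `S/G` from initial state `x0`. -/
inductive CLLang (δ : X → E → Option X) (Eobs : Set E) (S : List E → Set E) (x0 : X) :
    List E → Prop
  | nil : CLLang δ Eobs S x0 []
  | snoc (s : List E) (σ : E) : CLLang δ Eobs S x0 s →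
      (runStr δ x0 (s ++ [σ])).isSome → σ ∈ S (proj Eobs s) → CLLang δ Eobs S x0 (s ++ [σ])

/-- Closed-loop language of `S/G`. -/
def CLLangAll (δ : X → E → Option X) (Eobs : Set E) (S : List E → Set E) (X0 : Set X) :
    Set (List E) := {s | ∃ x0 ∈ X0, CLLang δ Eobs S x0 s}

/-- Projection of a language. -/
def projSet (Eobs : Set E) (L : Set (List E)) : Set (List E) := proj Eobs '' L

/-- Current-state estimate of the closed-loop system. -/
def ECest (δ : X → E → Option X) (Eobs : Set E) (S : List E → Set E) (X0 : Set X)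
    (α : List E) : Set X :=
  {x | ∃ x0 ∈ X0, ∃ s, CLLang δ Eobs S x0 s ∧ proj Eobs s = α ∧ runStr δ x0 s = some x}

/-- Initial-state estimate of the closed-loop system. -/
def EIest (δ : X → E → Option X) (Eobs : Set E) (S : List E → Set E) (X0 : Set X)
    (α : List E) : Set X :=
  {x0 | x0 ∈ X0 ∧ ∃ s, CLLang δ Eobs S x0 s ∧ proj Eobs s = α}

/-- Unobservable reach of `q` under control decision `γ`. -/
def URset (δ : X → E → Option X) (Euo γ : Set E) (q : Set X) : Set X :=
  {y | ∃ x ∈ q, ∃ s : List E, (∀ e ∈ s, e ∈ Euo ∩ γ) ∧ runStr δ x s = some y}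

/-- Observable reach of `q` upon occurrence of `σ`. -/
def NXset (δ : X → E → Option X) (σ : E) (q : Set X) : Set X :=
  {y | ∃ x ∈ q, δ x σ = some y}

/-- Events that can be observed from `q` under control decision `γ`. -/
def Oset (δ : X → E → Option X) (Eobs Euo : Set E) (q : Set X) (γ : Set E) : Set E :=
  {σ | σ ∈ Eobs ∩ γ ∧ ∃ x ∈ q, ∃ w : List E, (∀ e ∈ w, e ∈ Euo ∩ γ) ∧
      (runStr δ x (w ++ [σ])).isSome}

/-- Transition function of the augmented system `~G`. -/
def augDelta (δ : X → E → Option X) : X × X → E → Option (X × X) :=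
  fun p σ => (δ p.2 σ).map fun y => (p.1, y)

/-- Initial states of the augmented system. -/
def augX0 (X0 : Set X) : Set (X × X) := {p | p.1 ∈ X0 ∧ p.2 = p.1}

/-- First components of a set of augmented states. -/
def Iset (qt : Set (X × X)) : Set X := Prod.fst '' qt

/-- Active events of the supervisor automaton `H` at state `z`. -/
def ΔH (ξ : Z → E → Option Z) (z : Z) : Set E := {σ | (ξ z σ).isSome}

/-- Active events at `some z`, and `∅` at the attack-detected state `z_att = none`. -/
def ΔHopt (ξ : Z → E → Option Z) : Option Z → Set E
  | some z => ΔH ξ z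
  | none => ∅

/-- `H = (Z, Σ, ξ, z₀)` realizes supervisor `S`. -/
def Realizes (ξ : Z → E → Option Z) (z0 : Z) (δ : X → E → Option X)
    (Eobs : Set E) (S : List E → Set E) (X0 : Set X) : Prop :=
  (∀ z σ z', ξ z σ = some z' → z' ≠ z → σ ∈ Eobs) ∧
  (∀ s ∈ CLLangAll δ Eobs S X0, ∃ z, runStr ξ z0 s = some z ∧ ΔH ξ z = S (proj Eobs s))

/-- Product automaton `G × H`. -/
def prodDelta (δ : X → E → Option X) (ξ : Z → E → Option Z) :
    X × Z → E → Option (X × Z) :=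
  fun p σ => (δ p.1 σ).bind fun x' => (ξ p.2 σ).map fun z' => (x', z')

/-- Environment states of the AAS: `(q, qt, z)` with `z = none` encoding `z_att`. -/
abbrev EnvState (X Z : Type*) := Set X × Set (X × X) × Option Z

/-- Attack states of the AAS: `(q, qt, z, σ)`. -/
abbrev AtkState (X Z E : Type*) := Set X × Set (X × X) × Z × E

/-- States of the AAS. -/
abbrev MState (X Z E : Type*) := EnvState X Z ⊕ AtkState X Z E

/-- Events of the AAS: `Sum.inl σ` is a genuine event, `Sum.inr (some σ)` is `σ̂`,
and `Sum.inr none` is `ε̂`. -/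
abbrev MEvent (E : Type*) := E ⊕ Option E

/-- Action space `V(σ)` of the attacker. -/
def Vmap (Ev : Set E) (σ : E) : Set (Option E) :=
  if σ ∈ Ev then {a | ∃ σ', a = some σ' ∧ σ' ∈ Ev} ∪ {none} else {some σ}

/-- Transition function of the All Attack Structure. -/
noncomputable def AASf (δ : X → E → Option X) (Eobs Euo Ev : Set E)
    (ξ : Z → E → Option Z) : MState X Z E → MEvent E → Option (MState X Z E)
  | Sum.inl (q, qt, some z), Sum.inl σ =>
      if σ ∈ Oset (augDelta δ) Eobs Euo qt (ΔH ξ z) then some (Sum.inr (q, qt, z, σ))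
      else none
  | Sum.inr (q, qt, z, σ), Sum.inr a =>
      if a ∈ Vmap Ev σ then
        let q' : Set X := match a with
          | some σa => NXset δ σa (URset δ Euo (ΔH ξ z) q)
          | none => URset δ Euo (ΔH ξ z) q
        let qt' : Set (X × X) := NXset (augDelta δ) σ (URset (augDelta δ) Euo (ΔH ξ z) qt)
        if q'.Nonempty then
          match a with
          | some σa => (ξ z σa).map fun z' => Sum.inl (q', qt', some z')
          | none => some (Sum.inl (q', qt', some z))
        else some (Sum.inl (q', qt', (none : Option Z)))
      else none
  | _, _ => none

/-- Initial state of the AAS. -/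
def AASq0 (X0 : Set X) (z0 : Z) : MState X Z E := Sum.inl (X0, augX0 X0, some z0)

/-- Actual observation of an extended string. -/
def obs : List (MEvent E) → List E :=
  List.filterMap fun e => match e with | Sum.inl σ => some σ | Sum.inr _ => none

/-- Tampered (doctored) observation of an extended string. -/
def tam : List (MEvent E) → List E :=
  List.filterMap fun e => match e with | Sum.inl _ => none | Sum.inr a => a

/-- `h` is an extended string of the structure with transition function `f`
ending at an environment state. -/
def LeM (f : MState X Z E → MEvent E → Option (MState X Z E)) (q0 : MState X Z E)
    (h : List (MEvent E)) : Prop :=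
  ∃ qe : EnvState X Z, runStr f q0 h = some (Sum.inl qe)

/-- `A` is an attacker (with `none` encoding `ε`). -/
def IsAttacker (δ : X → E → Option X) (Eobs Ev : Set E) (X0 : Set X)
    (A : List E → Option E) : Prop :=
  A [] = none ∧
  ∀ α σ, (α ++ [σ]) ∈ projSet Eobs (Lang δ X0) →
    (σ ∉ Ev → A (α ++ [σ]) = some σ) ∧ (σ ∈ Ev → A (α ++ [σ]) ∈ Vmap Ev σ)

/-- The string-modification map `g_A` induced by attacker `A`. -/
def gA (A : List E → Option E) (α : List E) : List E :=
  (List.range α.length).filterMap fun i => A (α.take (i + 1))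

/-- The extended string `α_A` determined by attacker `A` and observation `α`
(the first argument is the accumulated prefix). -/
def extStr (A : List E → Option E) : List E → List E → List (MEvent E)
  | _, [] => []
  | pre, σ :: rest =>
      Sum.inl σ :: Sum.inr (A (pre ++ [σ])) :: extStr A (pre ++ [σ]) rest

/-- Positive detected environment state. -/
def PosDet (Xsec : Set X) (qe : EnvState X Z) : Prop := Iset qe.2.1 ⊆ Xsec

/-- Negative detected environment state. -/
def NegDet (Xsec : Set X) (qe : EnvState X Z) : Prop := Iset qe.2.1 ∩ Xsec = ∅

/-- Undetectable environment state. -/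
def Undet (δ : X → E → Option X) (Euo : Set E) (ξ : Z → E → Option Z)
    (Xsec : Set X) (qe : EnvState X Z) : Prop :=
  (Iset qe.2.1 ∩ Xsec).Nonempty ∧
  ∀ p ∈ URset (augDelta δ) Euo (ΔHopt ξ qe.2.2) qe.2.1, p.1 ∈ Xsec →
    ∃ p' ∈ URset (augDelta δ) Euo (ΔHopt ξ qe.2.2) qe.2.1, p'.2 = p.2 ∧ p'.1 ∉ Xsec

/-- Transition function of the simplified AAS: all outgoing transitions from
detected and undetectable environment states are removed. -/
noncomputable def SAASf (δ : X → E → Option X) (Eobs Euo Ev : Set E)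
    (ξ : Z → E → Option Z) (Xsec : Set X) :
    MState X Z E → MEvent E → Option (MState X Z E) := fun st e =>
  match st with
  | Sum.inl qe =>
      if PosDet Xsec qe ∨ NegDet Xsec qe ∨ Undet δ Euo ξ Xsec qe then none
      else AASf δ Eobs Euo Ev ξ st e
  | Sum.inr _ => AASf δ Eobs Euo Ev ξ st e

/-- Reachability in a structure over AAS states. -/
def ReachableFrom (f : MState X Z E → MEvent E → Option (MState X Z E))
    (st st' : MState X Z E) : Prop := ∃ t, runStr f st t = some st'

/-- `fm` is (the transition function of) a single attack structure of the
simplified AAS. -/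
def IsSAS (δ : X → E → Option X) (Eobs Euo Ev : Set E) (ξ : Z → E → Option Z)
    (z0 : Z) (X0 Xsec : Set X)
    (fm : MState X Z E → MEvent E → Option (MState X Z E)) : Prop :=
  (∀ st e st', fm st e = some st' → SAASf δ Eobs Euo Ev ξ Xsec st e = some st') ∧
  (∀ qa : AtkState X Z E, ReachableFrom fm (AASq0 X0 z0) (Sum.inr qa) →
      ∃! e, (fm (Sum.inr qa) e).isSome = true) ∧
  (∀ qe : EnvState X Z, ReachableFrom fm (AASq0 X0 z0) (Sum.inl qe) →
      ∀ e, fm (Sum.inl qe) e = SAASf δ Eobs Euo Ev ξ Xsec (Sum.inl qe) e)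

/-- `Am` is the attack strategy induced by the single attack structure `fm`. -/
def InducedStrategy (δ : X → E → Option X) (Eobs : Set E) (X0 : Set X)
    (fm : MState X Z E → MEvent E → Option (MState X Z E)) (z0 : Z)
    (Am : List E → Option E) : Prop :=
  Am [] = none ∧
  ∀ α σ, (α ++ [σ]) ∈ projSet Eobs (Lang δ X0) →
    ((∀ h, LeM fm (AASq0 X0 z0) h → obs h ≠ α ++ [σ]) → Am (α ++ [σ]) = some σ) ∧
    (∀ h, LeM fm (AASq0 X0 z0) h → obs h = α ++ [σ] →
        h.getLast? = some (Sum.inr (Am (α ++ [σ]))))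

/-- Attacker `A` is IS-detectable. -/
def ISDetectable (δ : X → E → Option X) (Eobs : Set E) (S : List E → Set E)
    (X0 Xsec : Set X) (A : List E → Option E) : Prop :=
  ∃ α σ, σ ∈ Eobs ∧
    (α ++ [σ]) ∈ projSet Eobs (CLLangAll δ Eobs (fun β => S (gA A β)) X0) ∧
    (ECest δ Eobs S X0 (gA A α)).Nonempty ∧
    EIest δ Eobs (fun β => S (gA A β)) X0 (α ++ [σ]) ⊆ Xsec


section Augmented

variable {δ : X → E → Option X} {Eobs : Set E} {S : List E → Set E}

theorem CLLang.mem_langFrom {x : X} {s : List E} (hs : CLLang δ Eobs S x s) :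
    s ∈ LangFrom δ x := by
  cases hs with
  | nil => rfl
  | snoc s σ _ hdef _ => exact hdef

theorem CLLang.mono {Y : Type*} {δ' : Y → E → Option Y} {x : X} {y : Y}
    (hsub : LangFrom δ x ⊆ LangFrom δ' y) {s : List E} (hs : CLLang δ Eobs S x s) :
    CLLang δ' Eobs S y s := by
  induction hs with
  | nil => exact .nil
  | snoc s σ _ hdef henabled ih => exact .snoc s σ ih (hsub hdef) henabled

theorem runStr_augDelta (δ : X → E → Option X) (p : X × X) (s : List E) :
    runStr (augDelta δ) p s = (runStr δ p.2 s).map (Prod.mk p.1) := by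
  induction s generalizing p with
  | nil => rfl
  | cons σ s ih =>
    simp only [runStr, augDelta]
    cases δ p.2 σ with
    | none => rfl
    | some y => exact ih (p.1, y)

theorem fst_eq_of_runStr_augDelta {p q : X × X} {s : List E}
    (h : runStr (augDelta δ) p s = some q) : q.1 = p.1 := by
  rw [runStr_augDelta] at h
  obtain ⟨_, _, rfl⟩ := Option.map_eq_some_iff.mp h
  rfl

theorem langFrom_augDelta (δ : X → E → Option X) (p : X × X) :
    LangFrom (augDelta δ) p = LangFrom δ p.2 := by
  ext s
  simp only [LangFrom, Set.mem_ofPred_eq, runStr_augDelta, Option.isSome_map]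

theorem clLang_augDelta_iff {p : X × X} {s : List E} :
    CLLang (augDelta δ) Eobs S p s ↔ CLLang δ Eobs S p.2 s :=
  ⟨CLLang.mono (langFrom_augDelta δ p).subset, CLLang.mono (langFrom_augDelta δ p).superset⟩

end Augmented

/-- The second component of `~G` evolves exactly as `G` does, so the supervisor acts identically on
both systems, while the first component never changes and thus remembers the initial state. -/
theorem stmt1_general (δ : X → E → Option X) (Eobs : Set E) (S : List E → Set E) (X0 : Set X)
    (α : List E) :
    EIest δ Eobs S X0 α = Iset (ECest (augDelta δ) Eobs S (augX0 X0) α) := by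
  ext x0
  constructor
  · rintro ⟨hx0, s, hs, hproj⟩
    have hs_aug : CLLang (augDelta δ) Eobs S (x0, x0) s := clLang_augDelta_iff.mpr hs
    obtain ⟨q, hrun⟩ := Option.isSome_iff_exists.mp hs_aug.mem_langFrom
    exact ⟨q, ⟨(x0, x0), ⟨hx0, rfl⟩, s, hs_aug, hproj, hrun⟩, fst_eq_of_runStr_augDelta hrun⟩
  · rintro ⟨q, ⟨p, ⟨hp, hdiag⟩, s, hs_aug, hproj, hrun⟩, rfl⟩
    rw [fst_eq_of_runStr_augDelta hrun]
    exact ⟨hp, s, hdiag ▸ clLang_augDelta_iff.mp hs_aug, hproj⟩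

/-! ## STATEMENT 1 -/
theorem stmt1 [Fintype X] [Fintype E] (δ : X → E → Option X) (Eobs : Set E)
    (Euc : Set E) (S : List E → Set E) (hΓ : ∀ α, Euc ⊆ S α) (X0 : Set X) :
    ∀ α ∈ projSet Eobs (CLLangAll δ Eobs S X0),
      EIest δ Eobs S X0 α = Iset (ECest (augDelta δ) Eobs S (augX0 X0) α) := by
  intro α _
  exact stmt1_general δ Eobs S X0 α

end DES
end

section
/- The current-state estimate of the closed-loop system satisfies the recursion: E^C_{S/G}(ε) = UR_{S(ε)}(X₀), and for every ασ ∈ P(L(S/G)) with σ ∈ Σ_o, E^C_{S/G}(ασ) = UR_{S(ασ)}(NX_σ(E^C_{S/G}(α))). -/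
open scoped Classical

namespace DES

variable {X E Z : Type*}

/-!
Cut a closed-loop string observed as `ασ` at its last observable event: `s ++ [σ] ++ w`, where `s`
is observed as `α` and `w` is unobservable. The supervisor's decision is constant along `w`, so `w`
is exactly a string of the unobservable reach under `S(ασ)`, while `σ` contributes one observable
step.
-/

section Run

variable {δ : X → E → Option X} {x z : X} {s t : List E}

theorem runStr_append (δ : X → E → Option X) (x : X) (s t : List E) :
    runStr δ x (s ++ t) = (runStr δ x s).bind fun y => runStr δ y t := by
  induction s generalizing x with
  | nil => rfl
  | cons σ s ih => simp only [List.cons_append, runStr, ih, Option.bind_assoc]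

theorem runStr_append_eq_some_iff :
    runStr δ x (s ++ t) = some z ↔ ∃ y, runStr δ x s = some y ∧ runStr δ y t = some z := by
  rw [runStr_append, Option.bind_eq_some_iff]

theorem runStr_singleton (δ : X → E → Option X) (x : X) (σ : E) : runStr δ x [σ] = δ x σ :=
  Option.bind_fun_some _

theorem isSome_runStr_of_append (h : (runStr δ x (s ++ t)).isSome) : (runStr δ x s).isSome := by
  rw [runStr_append] at h
  exact Option.isSome_of_isSome_bind h

end Run

section Projection

variable {Eobs : Set E} {s α : List E} {σ : E}

theorem proj_append (Eobs : Set E) (s t : List E) :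
    proj Eobs (s ++ t) = proj Eobs s ++ proj Eobs t :=
  List.filter_append s t

theorem proj_eq_nil_iff : proj Eobs s = [] ↔ ∀ e ∈ s, e ∉ Eobs := by
  simp only [proj, List.filter_eq_nil_iff, decide_eq_true_eq]

theorem proj_append_of_unobservable {w : List E} (hw : ∀ e ∈ w, e ∉ Eobs) :
    proj Eobs (s ++ w) = proj Eobs s := by
  rw [proj_append, proj_eq_nil_iff.2 hw, List.append_nil]

theorem proj_append_singleton_of_mem (hσ : σ ∈ Eobs) :
    proj Eobs (s ++ [σ]) = proj Eobs s ++ [σ] := by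
  rw [proj_append, proj, proj, List.filter_singleton, decide_eq_true hσ, cond_true]

theorem exists_eq_append_of_proj_eq_append_singleton (h : proj Eobs s = α ++ [σ]) :
    ∃ u w, s = u ++ [σ] ++ w ∧ proj Eobs u = α ∧ ∀ e ∈ w, e ∉ Eobs := by
  obtain ⟨u, v, rfl, hu, hv⟩ := List.filter_eq_append_iff.1 h
  obtain ⟨v, w, rfl, hv, -, hw⟩ := List.filter_eq_cons_iff.1 hv
  have hv : ∀ e ∈ v, e ∉ Eobs := by simpa only [decide_eq_true_eq] using hv
  refine ⟨u ++ v, w, ?_, (proj_append_of_unobservable hv).trans hu, proj_eq_nil_iff.1 hw⟩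
  simp only [List.append_assoc, List.singleton_append]

end Projection

section ClosedLoop

variable {δ : X → E → Option X} {Eobs : Set E} {S : List E → Set E} {X0 : Set X} {x0 : X}
  {s α : List E} {σ : E}

theorem CLLang.isSome_runStr (h : CLLang δ Eobs S x0 s) : (runStr δ x0 s).isSome := by
  cases h with
  | nil => rfl
  | snoc _ _ _ hrun _ => exact hrun

theorem clLang_append_singleton_iff :
    CLLang δ Eobs S x0 (s ++ [σ]) ↔
      CLLang δ Eobs S x0 s ∧ (runStr δ x0 (s ++ [σ])).isSome ∧ σ ∈ S (proj Eobs s) := by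
  refine ⟨fun h => ?_, fun ⟨hs, hrun, hσ⟩ => .snoc s σ hs hrun hσ⟩
  generalize ht : s ++ [σ] = t at h
  cases h with
  | nil => exact absurd ht (List.concat_ne_nil σ s)
  | snoc s' σ' hs' hrun hσ' =>
    obtain ⟨rfl, rfl⟩ := List.append_singleton_inj.1 ht
    exact ⟨hs', hrun, hσ'⟩

theorem clLang_append_iff_of_unobservable {w : List E} (hw : ∀ e ∈ w, e ∉ Eobs) :
    CLLang δ Eobs S x0 (s ++ w) ↔
      CLLang δ Eobs S x0 s ∧ (runStr δ x0 (s ++ w)).isSome ∧ ∀ e ∈ w, e ∈ S (proj Eobs s) := by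
  induction w using List.reverseRecOn with
  | nil =>
    simpa only [List.append_nil, List.not_mem_nil, false_imp_iff, implies_true, and_true] using
      ⟨fun h => ⟨h, h.isSome_runStr⟩, And.left⟩
  | append_singleton w e ih =>
    obtain ⟨hw, -⟩ := List.forall_mem_append.1 hw
    rw [← List.append_assoc, clLang_append_singleton_iff, ih hw, proj_append_of_unobservable hw,
      List.forall_mem_append, List.forall_mem_singleton]
    exact ⟨fun ⟨⟨hs, _, hwS⟩, hrun, heS⟩ => ⟨hs, hrun, hwS, heS⟩,
      fun ⟨hs, hrun, hwS, heS⟩ => ⟨⟨hs, isSome_runStr_of_append hrun, hwS⟩, hrun, heS⟩⟩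

theorem mem_supervisor_of_append_singleton_mem_projSet
    (h : α ++ [σ] ∈ projSet Eobs (CLLangAll δ Eobs S X0)) : σ ∈ S α := by
  obtain ⟨t, ⟨x0, -, ht⟩, hproj⟩ := h
  obtain ⟨s, w, rfl, rfl, hw⟩ := exists_eq_append_of_proj_eq_append_singleton hproj
  have hsσ := ((clLang_append_iff_of_unobservable hw).1 ht).1
  exact (clLang_append_singleton_iff.1 hsσ).2.2

theorem ECest_nil : ECest δ Eobs S X0 [] = URset δ Eobsᶜ (S []) X0 := by
  ext x
  constructor
  · rintro ⟨x0, hx0, s, hs, hproj, hrun⟩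
    have huo := proj_eq_nil_iff.1 hproj
    have hS := ((clLang_append_iff_of_unobservable (s := []) huo).1 hs).2.2
    exact ⟨x0, hx0, s, fun e he => ⟨huo e he, hS e he⟩, hrun⟩
  · rintro ⟨x0, hx0, s, hs, hrun⟩
    have huo : ∀ e ∈ s, e ∉ Eobs := fun e he => (hs e he).1
    have hcl : CLLang δ Eobs S x0 ([] ++ s) := (clLang_append_iff_of_unobservable huo).2
      ⟨.nil, Option.isSome_of_eq_some hrun, fun e he => (hs e he).2⟩
    exact ⟨x0, hx0, s, hcl, proj_eq_nil_iff.2 huo, hrun⟩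

theorem ECest_append_singleton_subset :
    ECest δ Eobs S X0 (α ++ [σ]) ⊆
      URset δ Eobsᶜ (S (α ++ [σ])) (NXset δ σ (ECest δ Eobs S X0 α)) := by
  rintro x ⟨x0, hx0, t, ht, hproj, hrun⟩
  obtain ⟨s, w, rfl, rfl, hw⟩ := exists_eq_append_of_proj_eq_append_singleton hproj
  obtain ⟨hsσ, -, hwS⟩ := (clLang_append_iff_of_unobservable hw).1 ht
  rw [← proj_append_of_unobservable hw, hproj] at hwS
  obtain ⟨z, hrun_sσ, hrun_w⟩ := runStr_append_eq_some_iff.1 hrun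
  obtain ⟨y, hrun_s, hstep⟩ := runStr_append_eq_some_iff.1 hrun_sσ
  rw [runStr_singleton] at hstep
  have hs := (clLang_append_singleton_iff.1 hsσ).1
  exact ⟨z, ⟨y, ⟨x0, hx0, s, hs, rfl, hrun_s⟩, hstep⟩, w, fun e he => ⟨hw e he, hwS e he⟩, hrun_w⟩

theorem URset_NXset_ECest_subset (hσ : σ ∈ Eobs) (hσS : σ ∈ S α) :
    URset δ Eobsᶜ (S (α ++ [σ])) (NXset δ σ (ECest δ Eobs S X0 α)) ⊆
      ECest δ Eobs S X0 (α ++ [σ]) := by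
  rintro x ⟨z, ⟨y, ⟨x0, hx0, s, hs, rfl, hrun_s⟩, hstep⟩, w, hw, hrun_w⟩
  have huo : ∀ e ∈ w, e ∉ Eobs := fun e he => (hw e he).1
  have hproj : proj Eobs (s ++ [σ]) = proj Eobs s ++ [σ] := proj_append_singleton_of_mem hσ
  have hrun_sσ : runStr δ x0 (s ++ [σ]) = some z :=
    runStr_append_eq_some_iff.2 ⟨y, hrun_s, (runStr_singleton δ y σ).trans hstep⟩
  have hrun : runStr δ x0 (s ++ [σ] ++ w) = some x :=
    runStr_append_eq_some_iff.2 ⟨z, hrun_sσ, hrun_w⟩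
  have hsσ : CLLang δ Eobs S x0 (s ++ [σ]) :=
    .snoc s σ hs (Option.isSome_of_eq_some hrun_sσ) hσS
  have hcl : CLLang δ Eobs S x0 (s ++ [σ] ++ w) := (clLang_append_iff_of_unobservable huo).2
    ⟨hsσ, Option.isSome_of_eq_some hrun, fun e he => hproj ▸ (hw e he).2⟩
  exact ⟨x0, hx0, _, hcl, (proj_append_of_unobservable huo).trans hproj, hrun⟩

end ClosedLoop

theorem stmt3_general (δ : X → E → Option X) (Eobs Euo : Set E)
    (hpart : ∀ e, e ∈ Euo ↔ e ∉ Eobs) (S : List E → Set E) (X0 : Set X) :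
    ECest δ Eobs S X0 [] = URset δ Euo (S []) X0 ∧
      ∀ α σ, σ ∈ Eobs → σ ∈ S α →
        ECest δ Eobs S X0 (α ++ [σ]) =
          URset δ Euo (S (α ++ [σ])) (NXset δ σ (ECest δ Eobs S X0 α)) := by
  obtain rfl : Euo = Eobsᶜ := Set.ext hpart
  exact ⟨ECest_nil, fun α σ hσ hσS =>
    ECest_append_singleton_subset.antisymm (URset_NXset_ECest_subset hσ hσS)⟩

/-! ## STATEMENT 3 -/
theorem stmt3 [Fintype X] [Fintype E] (δ : X → E → Option X) (Eobs Euo : Set E)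
    (hpart : ∀ e, e ∈ Euo ↔ e ∉ Eobs)
    (Euc : Set E) (S : List E → Set E) (hΓ : ∀ α, Euc ⊆ S α) (X0 : Set X) :
    ECest δ Eobs S X0 [] = URset δ Euo (S []) X0 ∧
      ∀ α σ, σ ∈ Eobs → (α ++ [σ]) ∈ projSet Eobs (CLLangAll δ Eobs S X0) →
        ECest δ Eobs S X0 (α ++ [σ]) =
          URset δ Euo (S (α ++ [σ])) (NXset δ σ (ECest δ Eobs S X0 α)) := by
  obtain ⟨hnil, hsnoc⟩ := stmt3_general δ Eobs Euo hpart S X0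
  exact ⟨hnil, fun α σ hσ h => hsnoc α σ hσ (mem_supervisor_of_append_singleton_mem_projSet h)⟩

end DES
end

section
/- (Proposition 3) Let q_e be a positive detected (respectively, negative detected) environment state of the All Attack Structure M. Then every environment state reachable from q_e in M is a positive detected (respectively, negative detected) state. -/
open scoped Classical

namespace DES

variable {X E Z : Type*}

/-!
A transition of the augmented system never changes the initial-state component, so along every run
of the All Attack Structure the set `I(q̃)` can only shrink. Both `I(q̃) ⊆ X_sec` and
`I(q̃) ∩ X_sec = ∅` pass to smaller sets.
-/

theorem runStr_invariant {δ : X → E → Option X} {P : X → Prop}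
    (step : ∀ x e y, δ x e = some y → P x → P y) {s : List E} {x y : X}
    (run : runStr δ x s = some y) (hx : P x) : P y := by
  induction s generalizing x with
  | nil => exact Option.some.inj run ▸ hx
  | cons σ s ih =>
    obtain ⟨w, hw, hrun⟩ := Option.bind_eq_some_iff.mp run
    exact ih hrun (step x σ w hw hx)

theorem augDelta_fst {δ : X → E → Option X} {p y : X × X} {σ : E}
    (h : augDelta δ p σ = some y) : y.1 = p.1 := by
  obtain ⟨_, -, rfl⟩ := Option.map_eq_some_iff.mp h
  rfl

theorem runStr_augDelta_fst {δ : X → E → Option X} {p y : X × X} {s : List E}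
    (h : runStr (augDelta δ) p s = some y) : y.1 = p.1 :=
  runStr_invariant (P := fun r => r.1 = p.1) (fun _ _ _ hstep => (augDelta_fst hstep).trans) h rfl

theorem Iset_NXset_augDelta_subset (δ : X → E → Option X) (σ : E) (qt : Set (X × X)) :
    Iset (NXset (augDelta δ) σ qt) ⊆ Iset qt := by
  rintro _ ⟨y, ⟨p, hp, hy⟩, rfl⟩
  exact ⟨p, hp, (augDelta_fst hy).symm⟩

theorem Iset_URset_augDelta_subset (δ : X → E → Option X) (Euo γ : Set E) (qt : Set (X × X)) :
    Iset (URset (augDelta δ) Euo γ qt) ⊆ Iset qt := by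
  rintro _ ⟨y, ⟨p, hp, s, -, hs⟩, rfl⟩
  exact ⟨p, hp, (runStr_augDelta_fst hs).symm⟩

/-- The augmented-state estimate `q̃` carried by a state of the All Attack Structure. It is defined
on attack states too, so that it can be followed through every single transition of a run. -/
def augEstimate : MState X Z E → Set (X × X)
  | Sum.inl qe => qe.2.1
  | Sum.inr qa => qa.2.1

section AllAttackStructure

variable {δ : X → E → Option X} {Eobs Euo Ev : Set E} {ξ : Z → E → Option Z}

theorem augEstimate_of_AASf_env {qe : EnvState X Z} {e : MEvent E} {st : MState X Z E}
    (h : AASf δ Eobs Euo Ev ξ (Sum.inl qe) e = some st) : augEstimate st = qe.2.1 := by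
  rcases qe with ⟨q, qt, _ | z⟩ <;> rcases e with σ | a <;> simp only [AASf, reduceCtorEq] at h
  split_ifs at h
  cases h
  rfl

theorem augEstimate_of_AASf_atk {q : Set X} {qt : Set (X × X)} {z : Z} {σ : E} {e : MEvent E}
    {st : MState X Z E} (h : AASf δ Eobs Euo Ev ξ (Sum.inr (q, qt, z, σ)) e = some st) :
    augEstimate st = NXset (augDelta δ) σ (URset (augDelta δ) Euo (ΔH ξ z) qt) := by
  rcases e with τ | _ | σa <;> simp only [AASf, reduceCtorEq] at h
  · split_ifs at h <;> cases h <;> rfl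
  · split_ifs at h
    · obtain ⟨_, -, rfl⟩ := Option.map_eq_some_iff.mp h
      rfl
    · cases h
      rfl

theorem Iset_augEstimate_subset_of_AASf {st st' : MState X Z E} {e : MEvent E}
    (h : AASf δ Eobs Euo Ev ξ st e = some st') :
    Iset (augEstimate st') ⊆ Iset (augEstimate st) := by
  rcases st with qe | ⟨q, qt, z, σ⟩
  · exact (congrArg Iset (augEstimate_of_AASf_env h)).subset
  · calc Iset (augEstimate st')
        = Iset (NXset (augDelta δ) σ (URset (augDelta δ) Euo (ΔH ξ z) qt)) :=
          congrArg Iset (augEstimate_of_AASf_atk h)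
      _ ⊆ Iset (URset (augDelta δ) Euo (ΔH ξ z) qt) := Iset_NXset_augDelta_subset ..
      _ ⊆ Iset qt := Iset_URset_augDelta_subset ..

theorem Iset_augEstimate_subset_of_runStr {st st' : MState X Z E} {t : List (MEvent E)}
    (h : runStr (AASf δ Eobs Euo Ev ξ) st t = some st') :
    Iset (augEstimate st') ⊆ Iset (augEstimate st) :=
  runStr_invariant (P := fun r => Iset (augEstimate r) ⊆ Iset (augEstimate st))
    (fun _ _ _ hstep => (Iset_augEstimate_subset_of_AASf hstep).trans) h subset_rfl

end AllAttackStructure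

theorem PosDet.of_Iset_subset {Xsec : Set X} {qe qe' : EnvState X Z} (hpos : PosDet Xsec qe)
    (h : Iset qe'.2.1 ⊆ Iset qe.2.1) : PosDet Xsec qe' :=
  h.trans hpos

theorem NegDet.of_Iset_subset {Xsec : Set X} {qe qe' : EnvState X Z} (hneg : NegDet Xsec qe)
    (h : Iset qe'.2.1 ⊆ Iset qe.2.1) : NegDet Xsec qe' :=
  Set.subset_eq_empty (Set.inter_subset_inter_left Xsec h) hneg

theorem stmt10_general (δ : X → E → Option X) (Eobs Euo Ev : Set E) (ξ : Z → E → Option Z)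
    (Xsec : Set X) (qe qe' : EnvState X Z) (t : List (MEvent E))
    (hreach : runStr (AASf δ Eobs Euo Ev ξ) (Sum.inl qe) t = some (Sum.inl qe')) :
    (PosDet Xsec qe → PosDet Xsec qe') ∧ (NegDet Xsec qe → NegDet Xsec qe') :=
  have hI : Iset qe'.2.1 ⊆ Iset qe.2.1 := Iset_augEstimate_subset_of_runStr hreach
  ⟨fun hpos => hpos.of_Iset_subset hI, fun hneg => hneg.of_Iset_subset hI⟩

/-! ## STATEMENT 10 (Proposition 3) -/
theorem stmt10 [Fintype X] [Fintype E] [Fintype Z] (δ : X → E → Option X)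
    (Eobs Euo Ev : Set E) (hpart : ∀ e, e ∈ Euo ↔ e ∉ Eobs) (hv : Ev ⊆ Eobs)
    (Euc : Set E) (S : List E → Set E) (hΓ : ∀ α, Euc ⊆ S α) (X0 : Set X)
    (ξ : Z → E → Option Z) (z0 : Z) (hreal : Realizes ξ z0 δ Eobs S X0)
    (Xsec : Set X) (hsec : Xsec ⊆ X0)
    (qe qe' : EnvState X Z) (t : List (MEvent E))
    (hreach : runStr (AASf δ Eobs Euo Ev ξ) (Sum.inl qe) t = some (Sum.inl qe')) :
    (PosDet Xsec qe → PosDet Xsec qe') ∧ (NegDet Xsec qe → NegDet Xsec qe') := by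
  exact stmt10_general δ Eobs Euo Ev ξ Xsec qe qe' t hreach

end DES
end
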